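/- arXiv:2211.02645 — 9 statements merged into one kernel-verified Lean document; each statement's English description precedes it below -/
import Mathlib

section
/- Let f : ℝ^d → ℝ be differentiable with M-Lipschitz gradient, i.e. ‖∇f(x₁) − ∇f(x₂)‖ ≤ M‖x₁ − x₂‖ for all x₁, x₂. Then for every x ∈ ℝ^d and every ν > 0, the forward-difference gradient estimator satisfies ‖∇^ν f(x) − ∇f(x)‖ ≤ (√d · M / 2) · ν. -/
open RealInnerProductSpace

/-- Forward-difference gradient estimator `∇^ν f(x) := Σ_j ((f(x + ν e_j) − f(x))/ν) e_j`. -/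
noncomputable def fdGrad (d : ℕ) (f : EuclideanSpace ℝ (Fin d) → ℝ)
    (x : EuclideanSpace ℝ (Fin d)) (ν : ℝ) : EuclideanSpace ℝ (Fin d) :=
  ∑ j : Fin d, ((f (x + ν • EuclideanSpace.single j (1 : ℝ)) - f x) / ν) •
    EuclideanSpace.single j (1 : ℝ)

theorem fd_coord (d : ℕ) (f : EuclideanSpace ℝ (Fin d) → ℝ) (M : ℝ)
    (hdiff : Differentiable ℝ f)
    (hlip : ∀ x₁ x₂, ‖gradient f x₁ - gradient f x₂‖ ≤ M * ‖x₁ - x₂‖)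
    (x : EuclideanSpace ℝ (Fin d)) (ν : ℝ) (hν : 0 < ν) (j : Fin d) :
    |f (x + ν • EuclideanSpace.single j (1 : ℝ)) - f x - ν * gradient f x j| ≤ M * ν ^ 2 / 2 := by
  set e : EuclideanSpace ℝ (Fin d) := EuclideanSpace.single j (1 : ℝ) with he
  have hen : ‖e‖ = 1 := by simp [he]
  have hin : ∀ v : EuclideanSpace ℝ (Fin d), inner ℝ v e = v j := by
    intro v; simp [he, EuclideanSpace.inner_single_right]
  have hder : ∀ t : ℝ, HasDerivAt (fun t : ℝ => f (x + t • e) - f x - t * gradient f x j)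
      (inner ℝ (gradient f (x + t • e) - gradient f x) e) t := by
    intro t
    have h1 : HasDerivAt (fun t : ℝ => x + t • e) e t := by
      simpa using ((hasDerivAt_id t).smul_const e).const_add x
    have h2 := (hdiff (x + t • e)).hasGradientAt.hasFDerivAt.comp_hasDerivAt t h1
    have h3 := (h2.sub_const (f x)).sub ((hasDerivAt_id t).mul_const (gradient f x j))
    refine HasDerivAt.congr_deriv h3 ?_
    rw [inner_sub_left, hin (gradient f x)]
    simp
  have hB : ∀ t : ℝ, HasDerivAt (fun t : ℝ => M * t ^ 2 / 2) (M * t) t := by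
    intro t
    have := (((hasDerivAt_id t).pow 2).const_mul M).div_const 2
    refine HasDerivAt.congr_deriv this ?_
    simp; ring
  have key := image_norm_le_of_norm_deriv_right_le_deriv_boundary
    (f := fun t : ℝ => f (x + t • e) - f x - t * gradient f x j)
    (f' := fun t => inner ℝ (gradient f (x + t • e) - gradient f x) e)
    (a := 0) (b := ν) (B := fun t => M * t ^ 2 / 2) (B' := fun t => M * t)
    (fun t _ => (hder t).continuousAt.continuousWithinAt)
    (fun t _ => (hder t).hasDerivWithinAt) (by simp) hB
    (by
      intro t ht
      refine (norm_inner_le_norm _ _).trans ?_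
      have := hlip (x + t • e) x
      rw [add_sub_cancel_left, norm_smul, hen, Real.norm_of_nonneg ht.1] at this
      simpa [hen] using this)
  simpa using key (Set.right_mem_Icc.2 hν.le)

theorem stmt0 (d : ℕ) (hd : 1 ≤ d) (f : EuclideanSpace ℝ (Fin d) → ℝ) (M : ℝ)
    (hdiff : Differentiable ℝ f)
    (hlip : ∀ x₁ x₂, ‖gradient f x₁ - gradient f x₂‖ ≤ M * ‖x₁ - x₂‖)
    (x : EuclideanSpace ℝ (Fin d)) (ν : ℝ) (hν : 0 < ν) :
    ‖fdGrad d f x ν - gradient f x‖ ≤ (Real.sqrt d * M / 2) * ν := by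
  have hM : 0 ≤ M := by
    have h := fd_coord d f M hdiff hlip x 1 one_pos ⟨0, hd⟩
    have := (abs_nonneg _).trans h
    linarith
  have hc : ∀ j, ‖(fdGrad d f x ν - gradient f x) j‖ ≤ M * ν / 2 := by
    intro j
    have h := fd_coord d f M hdiff hlip x ν hν j
    have e1 : (fdGrad d f x ν - gradient f x) j
        = (f (x + ν • EuclideanSpace.single j (1 : ℝ)) - f x - ν * gradient f x j) / ν := by
      have : fdGrad d f x ν j = (f (x + ν • EuclideanSpace.single j (1 : ℝ)) - f x) / ν := by
        simp [fdGrad, Pi.single_apply]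
      rw [PiLp.sub_apply, this]
      field_simp
    rw [e1, Real.norm_eq_abs, abs_div, abs_of_pos hν, div_le_iff₀ hν]
    linarith
  rw [EuclideanSpace.norm_eq]
  calc _ ≤ Real.sqrt (∑ _j : Fin d, (M * ν / 2) ^ 2) := by
        apply Real.sqrt_le_sqrt
        exact Finset.sum_le_sum fun j _ => pow_le_pow_left₀ (norm_nonneg _) (hc j) 2
    _ = Real.sqrt d * (M * ν / 2) := by
        rw [Finset.sum_const, Finset.card_univ, Fintype.card_fin, nsmul_eq_mul,
          Real.sqrt_mul (Nat.cast_nonneg d), Real.sqrt_sq (by positivity)]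
    _ = _ := by ring
end

section
/- Let f₁, …, f_m : ℝ^d → ℝ be differentiable, with each f_i L_i-Lipschitz and each ∇f_i M_i-Lipschitz, and set L_max := max_{1≤i≤m} L_i. Let x₀ satisfy f_i(x₀) < 0 for all i, let l* := min_{1≤i≤m} (−f_i(x₀))/L_max and ν* := 2 l*/√d, and for each i define S_i°(x₀) := {x ∈ ℝ^d : f_i(x₀) + ⟨∇^{ν*} f_i(x₀), x − x₀⟩ + 2 M_i ‖x − x₀‖² ≤ 0}. Then ⋂_{i=1}^m S_i°(x₀) ⊆ Ω, where Ω := {x ∈ ℝ^d : f_i(x) ≤ 0 for all i = 1, …, m}. -/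
open RealInnerProductSpace

theorem taylor_aux {d : ℕ} (f : EuclideanSpace ℝ (Fin d) → ℝ) (M : ℝ)
    (hdiff : Differentiable ℝ f)
    (hM : ∀ x₁ x₂, ‖gradient f x₁ - gradient f x₂‖ ≤ M * ‖x₁ - x₂‖)
    (x v : EuclideanSpace ℝ (Fin d)) :
    |f (x + v) - f x - ⟪gradient f x, v⟫| ≤ M / 2 * ‖v‖ ^ 2 := by
  have hd : ∀ t : ℝ, HasDerivAt (fun t : ℝ => f (x + t • v) - f x - t * ⟪gradient f x, v⟫)
      (⟪gradient f (x + t • v), v⟫ - ⟪gradient f x, v⟫) t := by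
    intro t
    have h1 : HasDerivAt (fun t : ℝ => x + t • v) v t := by
      simpa using ((hasDerivAt_id t).smul_const v).const_add x
    have h2 := ((hdiff (x + t • v)).hasGradientAt.hasFDerivAt).comp_hasDerivAt t h1
    have h3 := (h2.sub_const (f x)).sub ((hasDerivAt_id t).mul_const ⟪gradient f x, v⟫)
    refine HasDerivAt.congr_deriv (f' := _) h3 ?_
    simp
  have hB : ∀ t : ℝ, HasDerivAt (fun t : ℝ => M / 2 * ‖v‖ ^ 2 * t ^ 2) (M * ‖v‖ ^ 2 * t) t := by
    intro t
    have h := (hasDerivAt_pow 2 t).const_mul (M / 2 * ‖v‖ ^ 2)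
    refine HasDerivAt.congr_deriv h ?_
    norm_num
    ring
  have key := image_norm_le_of_norm_deriv_right_le_deriv_boundary (a := 0) (b := 1)
    (f := fun t : ℝ => f (x + t • v) - f x - t * ⟪gradient f x, v⟫)
    (f' := fun t => ⟪gradient f (x + t • v), v⟫ - ⟪gradient f x, v⟫)
    (B := fun t : ℝ => M / 2 * ‖v‖ ^ 2 * t ^ 2) (B' := fun t => M * ‖v‖ ^ 2 * t)
    (fun t _ => (hd t).continuousAt.continuousWithinAt)
    (fun t _ => (hd t).hasDerivWithinAt) (by simp) hB
    (by
      intro t ht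
      rw [← inner_sub_left]
      refine (norm_inner_le_norm _ _).trans ?_
      have h := hM (x + t • v) x
      rw [add_sub_cancel_left, norm_smul, Real.norm_of_nonneg ht.1] at h
      calc _ ≤ (M * (t * ‖v‖)) * ‖v‖ := by gcongr
        _ = _ := by ring)
  have := key (x := 1) (by simp)
  simpa using this

theorem fd_aux {d : ℕ} (f : EuclideanSpace ℝ (Fin d) → ℝ) (M : ℝ) (hM0 : 0 ≤ M)
    (hdiff : Differentiable ℝ f)
    (hM : ∀ x₁ x₂, ‖gradient f x₁ - gradient f x₂‖ ≤ M * ‖x₁ - x₂‖)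
    (x : EuclideanSpace ℝ (Fin d)) (ν : ℝ) (hν : 0 < ν) :
    ‖gradient f x - fdGrad d f x ν‖ ≤ Real.sqrt d * (M / 2 * ν) := by
  have hc : ∀ j, |(gradient f x - fdGrad d f x ν) j| ≤ M / 2 * ν := by
    intro j
    have h := taylor_aux f M hdiff hM x (ν • EuclideanSpace.single j (1 : ℝ))
    have e : (fdGrad d f x ν) j = (f (x + ν • EuclideanSpace.single j (1 : ℝ)) - f x) / ν := by
      simp [fdGrad, Pi.single_apply]
    rw [PiLp.sub_apply, e]
    rw [inner_smul_right, norm_smul, EuclideanSpace.inner_single_right] at h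
    simp only [EuclideanSpace.norm_single, Real.norm_of_nonneg hν.le, norm_one, one_mul,
      mul_one, conj_trivial] at h
    set a := f (x + ν • EuclideanSpace.single j (1 : ℝ)) - f x
    have e2 : (gradient f x) j - a / ν = -((a - ν * (gradient f x) j) / ν) := by
      field_simp; ring
    rw [e2, abs_neg, abs_div, abs_of_pos hν, div_le_iff₀ hν]
    linarith
  rw [EuclideanSpace.norm_eq]
  have hs : ∑ j, ‖(gradient f x - fdGrad d f x ν) j‖ ^ 2 ≤ (d : ℝ) * (M / 2 * ν) ^ 2 := by
    calc _ ≤ ∑ j : Fin d, (M / 2 * ν) ^ 2 := by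
          gcongr with j
          exact hc j
      _ = _ := by simp
  refine (Real.sqrt_le_sqrt hs).trans ?_
  rw [Real.sqrt_mul (by positivity), Real.sqrt_sq (by positivity)]

theorem stmt2 (d m : ℕ) (hd : 1 ≤ d) [NeZero m]
    (f : Fin m → EuclideanSpace ℝ (Fin d) → ℝ) (L M : Fin m → ℝ)
    (hdiff : ∀ i, Differentiable ℝ (f i))
    (hL : ∀ i x₁ x₂, |f i x₁ - f i x₂| ≤ L i * ‖x₁ - x₂‖)
    (hM : ∀ i x₁ x₂, ‖gradient (f i) x₁ - gradient (f i) x₂‖ ≤ M i * ‖x₁ - x₂‖)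
    (Lmax : ℝ) (hLmax : Lmax = ⨆ i, L i)
    (x₀ : EuclideanSpace ℝ (Fin d)) (hx₀ : ∀ i, f i x₀ < 0)
    (lstar νstar : ℝ)
    (hlstar : lstar = ⨅ i, (-(f i x₀)) / Lmax)
    (hνstar : νstar = 2 * lstar / Real.sqrt d) :
    (⋂ i, {x : EuclideanSpace ℝ (Fin d) |
        f i x₀ + ⟪fdGrad d (f i) x₀ νstar, x - x₀⟫ + 2 * M i * ‖x - x₀‖ ^ 2 ≤ 0}) ⊆
      {x : EuclideanSpace ℝ (Fin d) | ∀ i, f i x ≤ 0} := by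
  intro x hx i
  have hx := Set.mem_iInter.1 hx i
  simp only [Set.mem_setOf_eq] at hx
  have hd0 : (0 : ℝ) < d := by exact_mod_cast hd
  have hsd : 0 < Real.sqrt d := Real.sqrt_pos.2 hd0
  have hLi : L i ≤ Lmax := by
    rw [hLmax]; exact le_ciSup (Set.finite_range L).bddAbove i
  have hf := (abs_le.1 (hL i x x₀)).2
  have hr : 0 ≤ ‖x - x₀‖ := norm_nonneg _
  have h0 := hx₀ i
  have hf2 : L i * ‖x - x₀‖ ≤ Lmax * ‖x - x₀‖ := by gcongr
  by_cases hLm : Lmax ≤ 0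
  · have : Lmax * ‖x - x₀‖ ≤ 0 := mul_nonpos_of_nonpos_of_nonneg hLm hr
    linarith
  push Not at hLm
  have hl : 0 < lstar := by
    obtain ⟨k, hk⟩ := exists_eq_ciInf_of_finite (f := fun i => (-(f i x₀)) / Lmax)
    rw [hlstar, ← hk]
    exact div_pos (by linarith [hx₀ k]) hLm
  have hli : lstar ≤ -(f i x₀) / Lmax := by
    rw [hlstar]; exact ciInf_le (Set.finite_range _).bddBelow i
  rw [le_div_iff₀ hLm] at hli
  rcases le_total ‖x - x₀‖ lstar with h | h
  · have : Lmax * ‖x - x₀‖ ≤ Lmax * lstar := by gcongr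
    linarith
  have hν : 0 < νstar := by rw [hνstar]; positivity
  have hM0 : 0 ≤ M i := by
    have h1 := (norm_nonneg _).trans (hM i x x₀)
    exact nonneg_of_mul_nonneg_left h1 (hl.trans_le h)
  have h1 := fd_aux (f i) (M i) hM0 (hdiff i) (hM i) x₀ νstar hν
  have e : Real.sqrt d * (M i / 2 * νstar) = M i * lstar := by
    rw [hνstar]; field_simp
  rw [e] at h1
  have h2 := (abs_le.1 (taylor_aux (f i) (M i) (hdiff i) (hM i) x₀ (x - x₀))).2
  rw [add_sub_cancel] at h2
  have h3 := real_inner_le_norm (gradient (f i) x₀ - fdGrad d (f i) x₀ νstar) (x - x₀)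
  rw [inner_sub_left] at h3
  have h4 : ‖gradient (f i) x₀ - fdGrad d (f i) x₀ νstar‖ * ‖x - x₀‖
      ≤ M i * ‖x - x₀‖ * ‖x - x₀‖ := by
    gcongr
    exact h1.trans (by gcongr)
  have h5 : 0 ≤ M i * ‖x - x₀‖ ^ 2 := by positivity
  nlinarith
end

section
/- Let f : ℝ^d → ℝ be differentiable with M-Lipschitz gradient. Then for all x, y ∈ ℝ^d and every ν > 0, f(x) ≤ f(y) + ⟨∇^ν f(y), x − y⟩ + (√d ν M / 2)‖x − y‖ + M‖x − y‖². -/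
open RealInnerProductSpace

theorem descent_aux {E : Type*} [NormedAddCommGroup E] [InnerProductSpace ℝ E] [CompleteSpace E]
    (f : E → ℝ) (M : ℝ) (hdiff : Differentiable ℝ f)
    (hlip : ∀ x₁ x₂, ‖gradient f x₁ - gradient f x₂‖ ≤ M * ‖x₁ - x₂‖) (y v : E) :
    ‖f (y + v) - f y - ⟪gradient f y, v⟫‖ ≤ M / 2 * ‖v‖ ^ 2 := by
  have hd : ∀ t : ℝ, HasDerivAt (fun t : ℝ => f (y + t • v) - f y - t * ⟪gradient f y, v⟫)
      (⟪gradient f (y + t • v) - gradient f y, v⟫) t := by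
    intro t
    have h1 : HasDerivAt (fun t : ℝ => y + t • v) v t := by
      simpa using ((hasDerivAt_id t).smul_const v).const_add y
    have h2 := ((hdiff (y + t • v)).hasGradientAt.hasFDerivAt).comp_hasDerivAt t h1
    have h3 := (h2.sub_const (f y)).sub ((hasDerivAt_id t).mul_const (⟪gradient f y, v⟫))
    refine h3.congr_deriv ?_
    simp [inner_sub_left]
  have key := image_norm_le_of_norm_deriv_right_le_deriv_boundary (a := 0) (b := 1)
    (f := fun t : ℝ => f (y + t • v) - f y - t * ⟪gradient f y, v⟫)
    (f' := fun t => ⟪gradient f (y + t • v) - gradient f y, v⟫)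
    (B := fun t => M / 2 * ‖v‖ ^ 2 * t ^ 2) (B' := fun t => M * t * ‖v‖ ^ 2)
    (fun t _ => (hd t).continuousAt.continuousWithinAt) (fun t _ => (hd t).hasDerivWithinAt)
    (by simp)
    (fun t => (((hasDerivAt_pow 2 t).const_mul (M / 2 * ‖v‖ ^ 2))).congr_deriv
      (by norm_num; ring))
    (by
      intro t ht
      refine (norm_inner_le_norm _ _).trans ?_
      have h := hlip (y + t • v) y
      rw [add_sub_cancel_left, norm_smul, Real.norm_of_nonneg ht.1] at h
      calc _ ≤ (M * (t * ‖v‖)) * ‖v‖ := by gcongr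
        _ = _ := by ring)
  simpa using key (Set.right_mem_Icc.2 zero_le_one)

theorem stmt3 (d : ℕ) (hd : 1 ≤ d) (f : EuclideanSpace ℝ (Fin d) → ℝ) (M : ℝ)
    (hdiff : Differentiable ℝ f)
    (hlip : ∀ x₁ x₂, ‖gradient f x₁ - gradient f x₂‖ ≤ M * ‖x₁ - x₂‖)
    (x y : EuclideanSpace ℝ (Fin d)) (ν : ℝ) (hν : 0 < ν) :
    f x ≤ f y + ⟪fdGrad d f y ν, x - y⟫ + (Real.sqrt d * ν * M / 2) * ‖x - y‖ +
      M * ‖x - y‖ ^ 2 := by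
  have hM : 0 ≤ M := by
    have h := hlip (EuclideanSpace.single ⟨0, hd⟩ (1 : ℝ)) 0
    simp only [sub_zero, EuclideanSpace.norm_single, norm_one, mul_one] at h
    exact (norm_nonneg _).trans h
  have hc : ∀ j, ‖(fdGrad d f y ν - gradient f y) j‖ ≤ M * ν / 2 := by
    intro j
    have h := descent_aux f M hdiff hlip y (ν • EuclideanSpace.single j (1 : ℝ))
    have e : (fdGrad d f y ν) j = (f (y + ν • EuclideanSpace.single j (1 : ℝ)) - f y) / ν := by
      simp [fdGrad, Pi.single_apply]
    rw [norm_smul, EuclideanSpace.norm_single, norm_one, mul_one, Real.norm_of_nonneg hν.le,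
      inner_smul_right, EuclideanSpace.inner_single_right] at h
    simp only [one_mul, conj_trivial] at h
    have e2 : (fdGrad d f y ν - gradient f y) j =
        (f (y + ν • EuclideanSpace.single j (1 : ℝ)) - f y - ν * gradient f y j) / ν := by
      rw [PiLp.sub_apply, e]; field_simp
    rw [e2, norm_div, Real.norm_of_nonneg hν.le, div_le_iff₀ hν]
    linarith
  have hn : ‖fdGrad d f y ν - gradient f y‖ ≤ Real.sqrt d * (M * ν / 2) := by
    have h0 : 0 ≤ M * ν / 2 := by positivity
    rw [EuclideanSpace.norm_eq, ← Real.sqrt_sq h0, ← Real.sqrt_mul (Nat.cast_nonneg d)]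
    apply Real.sqrt_le_sqrt
    calc _ ≤ ∑ j : Fin d, (M * ν / 2) ^ 2 :=
          Finset.sum_le_sum fun j _ => pow_le_pow_left₀ (norm_nonneg _) (hc j) 2
      _ = _ := by simp
  have h1 := (le_abs_self _).trans (descent_aux f M hdiff hlip y (x - y))
  rw [add_sub_cancel] at h1
  have h2 := (neg_le_abs _).trans ((abs_real_inner_le_norm (fdGrad d f y ν - gradient f y) (x - y)).trans
    (mul_le_mul_of_nonneg_right hn (norm_nonneg _)))
  rw [inner_sub_left] at h2
  have h3 : 0 ≤ M * ‖x - y‖ ^ 2 := by positivity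
  linarith
end

section
/- Let f₁, …, f_m : ℝ^d → ℝ be differentiable, with each f_i L_i-Lipschitz, each ∇f_i M_{i,inf}-Lipschitz, L_i ≤ L_max for all i, and fix constants M_i > M_{i,inf} for each i. Let x₀ satisfy f_i(x₀) < 0 for all i, let l* := min_{1≤i≤m} (−f_i(x₀))/L_max, and let ν be any step with 0 < ν ≤ 2 l*/√d. Then every x in ⋂_{i=1}^m {x : f_i(x₀) + ⟨∇^ν f_i(x₀), x − x₀⟩ + 2 M_i ‖x − x₀‖² ≤ 0} satisfies f_i(x) < 0 for all i = 1, …, m (strict feasibility). -/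
open RealInnerProductSpace

theorem descent_aux_s4 {E : Type*} [NormedAddCommGroup E] [NormedSpace ℝ E]
    (f : E → ℝ) (f' : E → E →L[ℝ] ℝ) (K : ℝ) (hf : ∀ x, HasFDerivAt f (f' x) x)
    (hK : ∀ x y, ‖f' x - f' y‖ ≤ K * ‖x - y‖) (x v : E) :
    f (x + v) - f x - f' x v ≤ K / 2 * ‖v‖ ^ 2 := by
  let φ : ℝ → ℝ := fun t => f (x + t • v) - t * f' x v - K / 2 * ‖v‖ ^ 2 * t ^ 2
  have hline : ∀ t : ℝ, HasDerivAt (fun t : ℝ => x + t • v) v t := by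
    intro t
    simpa using ((hasDerivAt_id t).smul_const v).const_add x
  have hφ : ∀ t, HasDerivAt φ (f' (x + t • v) v - f' x v - K / 2 * ‖v‖ ^ 2 * (2 * t)) t := by
    intro t
    have h1 := (hf (x + t • v)).comp_hasDerivAt t (hline t)
    have h2 := (hasDerivAt_id t).mul_const (f' x v)
    have h3 := ((hasDerivAt_id t).pow 2).const_mul (K / 2 * ‖v‖ ^ 2)
    have h4 := (h1.sub h2).sub h3
    refine h4.congr_deriv ?_
    simp
  have hanti : AntitoneOn φ (Set.Icc 0 1) := by
    refine antitoneOn_of_deriv_nonpos (convex_Icc 0 1)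
      (fun t _ => (hφ t).continuousAt.continuousWithinAt)
      (fun t _ => (hφ t).differentiableAt.differentiableWithinAt) ?_
    intro t ht
    rw [interior_Icc] at ht
    rw [(hφ t).deriv]
    have h1 : (f' (x + t • v) - f' x) v ≤ ‖f' (x + t • v) - f' x‖ * ‖v‖ :=
      (le_abs_self _).trans ((f' (x + t • v) - f' x).le_opNorm v)
    have h2 := hK (x + t • v) x
    rw [add_sub_cancel_left, norm_smul, Real.norm_of_nonneg ht.1.le] at h2
    have h3 := mul_le_mul_of_nonneg_right h2 (norm_nonneg v)
    rw [sub_apply] at h1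
    nlinarith
  have := hanti (Set.left_mem_Icc.2 zero_le_one) (Set.right_mem_Icc.2 zero_le_one) zero_le_one
  simp [φ] at this
  linarith

theorem descent_abs {E : Type*} [NormedAddCommGroup E] [NormedSpace ℝ E]
    (f : E → ℝ) (f' : E → E →L[ℝ] ℝ) (K : ℝ) (hf : ∀ x, HasFDerivAt f (f' x) x)
    (hK : ∀ x y, ‖f' x - f' y‖ ≤ K * ‖x - y‖) (x v : E) :
    |f (x + v) - f x - f' x v| ≤ K / 2 * ‖v‖ ^ 2 := by
  rw [abs_le]
  have h1 := descent_aux_s4 f f' K hf hK x v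
  have h2 := descent_aux_s4 (fun x => - f x) (fun x => - f' x) K (fun x => (hf x).neg)
    (fun x y => by
      rw [show - f' x - - f' y = -(f' x - f' y) by abel, norm_neg]; exact hK x y) x v
  simp only [neg_apply] at h2
  constructor <;> linarith

theorem descent_grad (d : ℕ) (f : EuclideanSpace ℝ (Fin d) → ℝ) (K : ℝ)
    (hf : Differentiable ℝ f)
    (hK : ∀ x y, ‖gradient f x - gradient f y‖ ≤ K * ‖x - y‖) (x v : EuclideanSpace ℝ (Fin d)) :
    |f (x + v) - f x - ⟪gradient f x, v⟫| ≤ K / 2 * ‖v‖ ^ 2 := by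
  have := descent_abs f (fun x => InnerProductSpace.toDual ℝ _ (gradient f x)) K
    (fun x => (hf x).hasGradientAt.hasFDerivAt)
    (fun x y => by rw [← map_sub, LinearIsometryEquiv.norm_map]; exact hK x y) x v
  simpa using this

theorem fd_err (d : ℕ) (f : EuclideanSpace ℝ (Fin d) → ℝ) (K : ℝ) (hK0 : 0 ≤ K)
    (hf : Differentiable ℝ f)
    (hK : ∀ x y, ‖gradient f x - gradient f y‖ ≤ K * ‖x - y‖) (x : EuclideanSpace ℝ (Fin d))
    (ν : ℝ) (hν : 0 < ν) :
    ‖fdGrad d f x ν - gradient f x‖ ≤ Real.sqrt d * (K / 2 * ν) := by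
  have hc : ∀ j, ‖(fdGrad d f x ν - gradient f x) j‖ ≤ K / 2 * ν := by
    intro j
    have h := descent_grad d f K hf hK x (ν • EuclideanSpace.single j (1 : ℝ))
    rw [norm_smul, Real.norm_of_nonneg hν.le, EuclideanSpace.norm_single, inner_smul_right,
      EuclideanSpace.inner_single_right] at h
    simp only [norm_one, mul_one, one_mul, conj_trivial] at h
    have e : (fdGrad d f x ν) j = (f (x + ν • EuclideanSpace.single j (1 : ℝ)) - f x) / ν := by
      simp [fdGrad, Pi.single_apply]
    rw [PiLp.sub_apply, e, Real.norm_eq_abs]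
    have e2 : (f (x + ν • EuclideanSpace.single j (1 : ℝ)) - f x) / ν - gradient f x j
      = (f (x + ν • EuclideanSpace.single j (1 : ℝ)) - f x - ν * gradient f x j) / ν := by
      field_simp
    rw [e2, abs_div, abs_of_pos hν, div_le_iff₀ hν]
    linarith
  rw [EuclideanSpace.norm_eq]
  have h0 : 0 ≤ K / 2 * ν := by positivity
  rw [← Real.sqrt_sq h0, ← Real.sqrt_mul (Nat.cast_nonneg d)]
  apply Real.sqrt_le_sqrt
  calc _ ≤ ∑ _j : Fin d, (K / 2 * ν) ^ 2 :=
        Finset.sum_le_sum fun j _ => pow_le_pow_left₀ (norm_nonneg _) (hc j) 2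
    _ = _ := by simp

theorem stmt4 (d m : ℕ) (hd : 1 ≤ d) [NeZero m]
    (f : Fin m → EuclideanSpace ℝ (Fin d) → ℝ) (L Minf M : Fin m → ℝ) (Lmax : ℝ)
    (hdiff : ∀ i, Differentiable ℝ (f i))
    (hL : ∀ i x₁ x₂, |f i x₁ - f i x₂| ≤ L i * ‖x₁ - x₂‖)
    (hMinf : ∀ i x₁ x₂, ‖gradient (f i) x₁ - gradient (f i) x₂‖ ≤ Minf i * ‖x₁ - x₂‖)
    (hLmax : ∀ i, L i ≤ Lmax)
    (hM : ∀ i, Minf i < M i)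
    (x₀ : EuclideanSpace ℝ (Fin d)) (hx₀ : ∀ i, f i x₀ < 0)
    (lstar : ℝ) (hlstar : lstar = ⨅ i, (-(f i x₀)) / Lmax)
    (ν : ℝ) (hν : 0 < ν) (hν' : ν ≤ 2 * lstar / Real.sqrt d) :
    ∀ x ∈ ⋂ i, {x : EuclideanSpace ℝ (Fin d) |
        f i x₀ + ⟪fdGrad d (f i) x₀ ν, x - x₀⟫ + 2 * M i * ‖x - x₀‖ ^ 2 ≤ 0},
      ∀ i, f i x < 0 := by
  intro x hx i
  have hxi := Set.mem_iInter.1 hx i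
  simp only [Set.mem_setOf_eq] at hxi
  have hsd : 0 < Real.sqrt d := Real.sqrt_pos.2 (by exact_mod_cast hd)
  rw [le_div_iff₀ hsd] at hν'
  have hl : 0 < lstar := by nlinarith [mul_pos hν hsd]
  have hle : lstar ≤ -(f i x₀) / Lmax := by
    rw [hlstar]; exact ciInf_le (Set.finite_range _).bddBelow i
  have hLm : 0 < Lmax := by
    by_contra hcon
    have : -(f i x₀) / Lmax ≤ 0 :=
      div_nonpos_of_nonneg_of_nonpos (by linarith [hx₀ i]) (not_lt.1 hcon)
    linarith
  rw [le_div_iff₀ hLm] at hle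
  have hK0 : 0 ≤ Minf i := by
    have h := hMinf i (EuclideanSpace.single ⟨0, hd⟩ (1 : ℝ)) 0
    rw [sub_zero, EuclideanSpace.norm_single] at h
    simp only [norm_one, mul_one] at h
    exact (norm_nonneg _).trans h
  have hr0 := norm_nonneg (x - x₀)
  rcases lt_or_ge ‖x - x₀‖ lstar with hr | hr
  · have h1 := (le_abs_self _).trans (hL i x x₀)
    have h2 := mul_le_mul_of_nonneg_right (hLmax i) hr0
    have h3 := mul_lt_mul_of_pos_left hr hLm
    linarith
  · have h1 := (abs_le.1 (descent_grad d (f i) (Minf i) (hdiff i) (hMinf i) x₀ (x - x₀))).2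
    rw [add_sub_cancel] at h1
    have h2 := fd_err d (f i) (Minf i) hK0 (hdiff i) (hMinf i) x₀ ν hν
    have h3 : ‖fdGrad d (f i) x₀ ν - gradient (f i) x₀‖ ≤ Minf i * ‖x - x₀‖ := by
      have := mul_le_mul_of_nonneg_left (hν'.trans (mul_le_mul_of_nonneg_left hr zero_le_two)) hK0
      linarith
    have h4 := (abs_le.1 (abs_real_inner_le_norm (fdGrad d (f i) x₀ ν - gradient (f i) x₀)
      (x - x₀))).1
    have h5 := mul_le_mul_of_nonneg_right h3 hr0
    rw [inner_sub_left] at h4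
    have h6 : 0 < ‖x - x₀‖ ^ 2 := by have := hl.trans_le hr; positivity
    have h7 := mul_lt_mul_of_pos_right (hM i) h6
    have h8 := mul_nonneg hK0 h6.le
    nlinarith
end

section
/- Let f₀, f₁, …, f_m : ℝ^d → ℝ be convex and differentiable, Ω := {x : f_i(x) ≤ 0 for all i = 1..m}, and suppose there exists x̄ with f_i(x̄) < 0 for all i = 1..m (Slater's condition). Let x_c ∈ Ω be such that ∇f₀(x_c) ≠ 0, ∇f_i(x_c) ≠ 0 for every i with f_i(x_c) = 0, and x_c is not a minimizer of f₀ over Ω. Then there exists x_s ∈ Ω such that f₀(x_s) < f₀(x_c) and ⟨∇f_i(x_c), x_s − x_c⟩ < 0 for every i ∈ {1,…,m} with f_i(x_c) = 0. -/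
open RealInnerProductSpace

theorem grad_ineq_aux {d : ℕ} (g : EuclideanSpace ℝ (Fin d) → ℝ)
    (hc : ConvexOn ℝ Set.univ g) (hd : Differentiable ℝ g)
    (x y : EuclideanSpace ℝ (Fin d)) :
    ⟪gradient g x, y - x⟫ ≤ g y - g x := by
  have h1 : HasDerivAt (fun t : ℝ => g (AffineMap.lineMap x y t)) ⟪gradient g x, y - x⟫ 0 := by
    have hg : HasFDerivAt g (fderiv ℝ g x) (AffineMap.lineMap x y (0:ℝ)) := by
      simpa using (hd x).hasFDerivAt
    have hl : HasDerivAt (fun t : ℝ => AffineMap.lineMap x y t) (y - x) (0:ℝ) :=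
      AffineMap.hasDerivAt_lineMap
    have := hg.comp_hasDerivAt (0:ℝ) hl
    have e : ⟪gradient g x, y - x⟫ = fderiv ℝ g x (y - x) := by
      simp [gradient]
    rw [e]
    exact this
  have h2 : ConvexOn ℝ Set.univ (fun t : ℝ => g (AffineMap.lineMap x y t)) := by
    exact hc.comp_affineMap (AffineMap.lineMap x y : ℝ →ᵃ[ℝ] _)
  have := h2.le_slope_of_hasDerivAt (Set.mem_univ 0) (Set.mem_univ 1) one_pos h1
  simpa [slope] using this

theorem stmt11 (d m : ℕ) (f₀ : EuclideanSpace ℝ (Fin d) → ℝ)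
    (f : Fin m → EuclideanSpace ℝ (Fin d) → ℝ)
    (hconv₀ : ConvexOn ℝ Set.univ f₀) (hconv : ∀ i, ConvexOn ℝ Set.univ (f i))
    (hdiff₀ : Differentiable ℝ f₀) (hdiff : ∀ i, Differentiable ℝ (f i))
    (Ω : Set (EuclideanSpace ℝ (Fin d)))
    (hΩ : Ω = {x | ∀ i, f i x ≤ 0})
    (x_bar : EuclideanSpace ℝ (Fin d)) (hSlater : ∀ i, f i x_bar < 0)
    (x_c : EuclideanSpace ℝ (Fin d)) (hxc : x_c ∈ Ω)
    (hgrad₀ : gradient f₀ x_c ≠ 0)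
    (hgrad : ∀ i, f i x_c = 0 → gradient (f i) x_c ≠ 0)
    (hnotmin : ¬ ∀ y ∈ Ω, f₀ x_c ≤ f₀ y) :
    ∃ x_s ∈ Ω, f₀ x_s < f₀ x_c ∧
      ∀ i, f i x_c = 0 → ⟪gradient (f i) x_c, x_s - x_c⟫ < 0 := by
  subst hΩ
  push Not at hnotmin
  obtain ⟨y, hy, hlt⟩ := hnotmin
  obtain ⟨t, ht0, ht1, ht⟩ : ∃ t : ℝ, 0 < t ∧ t ≤ 1 ∧
      (1 - t) * f₀ y + t * f₀ x_bar < f₀ x_c := by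
    have hD : 0 < (f₀ x_c - f₀ y) + |f₀ x_bar - f₀ y| := by
      have := abs_nonneg (f₀ x_bar - f₀ y)
      linarith
    have ha := le_abs_self (f₀ x_bar - f₀ y)
    have ha0 := abs_nonneg (f₀ x_bar - f₀ y)
    refine ⟨(f₀ x_c - f₀ y) / ((f₀ x_c - f₀ y) + |f₀ x_bar - f₀ y|),
      div_pos (by linarith) hD, (div_le_one hD).2 (by linarith), ?_⟩
    set t := (f₀ x_c - f₀ y) / ((f₀ x_c - f₀ y) + |f₀ x_bar - f₀ y|) with htd
    have htp : 0 < t := div_pos (by linarith) hD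
    have hm : t * ((f₀ x_c - f₀ y) + |f₀ x_bar - f₀ y|) = f₀ x_c - f₀ y :=
      div_mul_cancel₀ _ hD.ne'
    nlinarith [mul_le_mul_of_nonneg_left ha htp.le, mul_pos htp (sub_pos.2 hlt)]
  have key : ∀ i, f i ((1 - t) • y + t • x_bar) < 0 := by
    intro i
    have h := (hconv i).2 (Set.mem_univ y) (Set.mem_univ x_bar)
      (sub_nonneg.2 ht1) ht0.le (by ring)
    simp only [smul_eq_mul] at h
    have h1 := mul_nonneg (sub_nonneg.2 ht1) (neg_nonneg.2 (hy i))
    have h2 := mul_pos ht0 (neg_pos.2 (hSlater i))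
    linarith
  refine ⟨(1 - t) • y + t • x_bar, fun i => (key i).le, ?_, ?_⟩
  · have h := hconv₀.2 (Set.mem_univ y) (Set.mem_univ x_bar)
      (sub_nonneg.2 ht1) ht0.le (by ring)
    simp only [smul_eq_mul] at h
    linarith
  · intro i hi
    have := grad_ineq_aux (f i) (hconv i) (hdiff i) x_c ((1 - t) • y + t • x_bar)
    have := key i
    linarith
end

section
/- Let f₀ : ℝ^d → ℝ be differentiable with M₀-Lipschitz gradient, μ > 0, and let x_c, x_s ∈ ℝ^d with x_s ≠ x_c be such that σ := ⟨∇f₀(x_c), x_s − x_c⟩ < 0. Define x(t) := x_c + t(x_s − x_c) and t̄ := min(1, −σ/((M₀ + μ)‖x_s − x_c‖²)). Then for every t with 0 < t < t̄, f₀(x(t)) + μ‖x(t) − x_c‖² < f₀(x_c). -/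
open RealInnerProductSpace

theorem stmt12 (d : ℕ) (f₀ : EuclideanSpace ℝ (Fin d) → ℝ) (M₀ μ : ℝ) (hμ : 0 < μ)
    (hdiff : Differentiable ℝ f₀)
    (hlip : ∀ x₁ x₂, ‖gradient f₀ x₁ - gradient f₀ x₂‖ ≤ M₀ * ‖x₁ - x₂‖)
    (x_c x_s : EuclideanSpace ℝ (Fin d)) (hne : x_s ≠ x_c)
    (σ : ℝ) (hσdef : σ = ⟪gradient f₀ x_c, x_s - x_c⟫) (hσ : σ < 0)
    (tbar : ℝ) (htbar : tbar = min 1 (-σ / ((M₀ + μ) * ‖x_s - x_c‖ ^ 2))) :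
    ∀ t : ℝ, 0 < t → t < tbar →
      f₀ (x_c + t • (x_s - x_c)) + μ * ‖(x_c + t • (x_s - x_c)) - x_c‖ ^ 2 < f₀ x_c := by
  intro t ht0 htb
  set v := x_s - x_c with hv
  have hvpos : 0 < ‖v‖ := norm_pos_iff.mpr (sub_ne_zero.mpr hne)
  have hM : 0 ≤ M₀ := by
    have h := (norm_nonneg _).trans (hlip x_s x_c)
    exact nonneg_of_mul_nonneg_left h hvpos
  have hden : 0 < (M₀ + μ) * ‖v‖ ^ 2 := by positivity
  have ht : t < -σ / ((M₀ + μ) * ‖v‖ ^ 2) :=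
    lt_of_lt_of_le htb (htbar ▸ min_le_right _ _)
  rw [lt_div_iff₀ hden] at ht
  have hg : ∀ s : ℝ, HasDerivAt (fun s : ℝ => f₀ (x_c + s • v))
      (⟪gradient f₀ (x_c + s • v), v⟫) s := by
    intro s
    have h1 : HasDerivAt (fun s : ℝ => x_c + s • v) v s := by
      simpa using ((hasDerivAt_id s).smul_const v).const_add x_c
    have h2 := (hdiff (x_c + s • v)).hasGradientAt.hasFDerivAt
    have h3 := h2.comp_hasDerivAt s h1
    rw [InnerProductSpace.toDual_apply_apply] at h3
    exact h3
  obtain ⟨s, ⟨hs0, hst⟩, hs⟩ := exists_hasDerivAt_eq_slope _ _ ht0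
    (fun s _ => (hg s).continuousAt.continuousWithinAt) (fun s _ => hg s)
  simp only [zero_smul, add_zero, sub_zero] at hs
  rw [eq_div_iff ht0.ne'] at hs
  have hin : ⟪gradient f₀ (x_c + s • v), v⟫ ≤ σ + s * M₀ * ‖v‖ ^ 2 := by
    have h1 := real_inner_le_norm (gradient f₀ (x_c + s • v) - gradient f₀ x_c) v
    rw [inner_sub_left, ← hσdef] at h1
    have h2 := hlip (x_c + s • v) x_c
    rw [add_sub_cancel_left, norm_smul, Real.norm_of_nonneg hs0.le] at h2
    have h3 := mul_le_mul_of_nonneg_right h2 hvpos.le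
    nlinarith
  rw [add_sub_cancel_left, norm_smul, Real.norm_of_nonneg ht0.le]
  have h4 : s * M₀ * ‖v‖ ^ 2 ≤ t * M₀ * ‖v‖ ^ 2 := by gcongr
  have h5 : (⟪gradient f₀ (x_c + s • v), v⟫ + t * μ * ‖v‖ ^ 2) * t < 0 :=
    mul_neg_of_neg_of_pos (by nlinarith) ht0
  nlinarith
end

section
/- Consider the SZO-QQ setup below, and let x_c be a cluster point of the iterate sequence (x_k) (i.e. the limit of some subsequence). If ∇f₀(x_c) ≠ 0, then the active set at x_c is nonempty, i.e. there exists i ∈ {1,…,m} with f_i(x_c) = 0. -/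
open RealInnerProductSpace Filter

theorem fdGrad_bound (d : ℕ) (f : EuclideanSpace ℝ (Fin d) → ℝ) (L : ℝ)
    (hL : ∀ x₁ x₂, |f x₁ - f x₂| ≤ L * ‖x₁ - x₂‖)
    (x : EuclideanSpace ℝ (Fin d)) (ν : ℝ) : ‖fdGrad d f x ν‖ ≤ d * |L| := by
  unfold fdGrad
  refine (norm_sum_le _ _).trans ?_
  have h : ∀ j ∈ (Finset.univ : Finset (Fin d)),
      ‖((f (x + ν • EuclideanSpace.single j (1 : ℝ)) - f x) / ν) •
        (EuclideanSpace.single j (1 : ℝ) : EuclideanSpace ℝ (Fin d))‖ ≤ |L| := by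
    intro j _
    rw [norm_smul, EuclideanSpace.norm_single, norm_one, mul_one, Real.norm_eq_abs, abs_div]
    refine div_le_of_le_mul₀ (abs_nonneg _) (abs_nonneg _) ?_
    refine (hL _ _).trans ?_
    rw [add_sub_cancel_left, norm_smul, EuclideanSpace.norm_single, norm_one, mul_one,
      Real.norm_eq_abs]
    exact mul_le_mul_of_nonneg_right (le_abs_self L) (abs_nonneg _)
  refine (Finset.sum_le_sum h).trans ?_
  simp

theorem stmt15 (d m : ℕ) (hd : 1 ≤ d) [NeZero m]
    (f₀ : EuclideanSpace ℝ (Fin d) → ℝ) (f : Fin m → EuclideanSpace ℝ (Fin d) → ℝ)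
    (hconv₀ : ConvexOn ℝ Set.univ f₀) (hconv : ∀ i, ConvexOn ℝ Set.univ (f i))
    (hdiff₀ : Differentiable ℝ f₀) (hdiff : ∀ i, Differentiable ℝ (f i))
    (L₀ M₀ : ℝ) (L Minf M : Fin m → ℝ) (μ : ℝ) (hμ : 0 < μ)
    (hL₀ : ∀ x₁ x₂, |f₀ x₁ - f₀ x₂| ≤ L₀ * ‖x₁ - x₂‖)
    (hM₀ : ∀ x₁ x₂, ‖gradient f₀ x₁ - gradient f₀ x₂‖ ≤ M₀ * ‖x₁ - x₂‖)
    (hL : ∀ i x₁ x₂, |f i x₁ - f i x₂| ≤ L i * ‖x₁ - x₂‖)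
    (hMinf : ∀ i x₁ x₂, ‖gradient (f i) x₁ - gradient (f i) x₂‖ ≤ Minf i * ‖x₁ - x₂‖)
    (hM : ∀ i, Minf i < M i)
    (Lmax : ℝ) (hLmax : Lmax = ⨆ i, L i)
    (x : ℕ → EuclideanSpace ℝ (Fin d))
    (hfeas : ∀ k i, f i (x k) < 0)
    (l ν : ℕ → ℝ)
    (hl : ∀ k, l k = ⨅ i, (-(f i (x k))) / Lmax)
    (hν₀ : ν 0 = 2 * l 0 / Real.sqrt d)
    (hνk : ∀ k : ℕ, 1 ≤ k → ν k = min (2 * l k / Real.sqrt d) (1 / (k : ℝ)))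
    (S : ℕ → Set (EuclideanSpace ℝ (Fin d)))
    (hS : ∀ k, S k = ⋂ i, {y : EuclideanSpace ℝ (Fin d) |
        f i (x k) + ⟪fdGrad d (f i) (x k) (ν k), y - x k⟫ + 2 * M i * ‖y - x k‖ ^ 2 ≤ 0})
    (hstep : ∀ k, x (k + 1) ∈ S k)
    (hopt : ∀ k, ∀ y ∈ S k,
      f₀ (x (k + 1)) + μ * ‖x (k + 1) - x k‖ ^ 2 ≤ f₀ y + μ * ‖y - x k‖ ^ 2)
    (β : ℝ)
    (hβbdd : Bornology.IsBounded {y : EuclideanSpace ℝ (Fin d) | (∀ i, f i y ≤ 0) ∧ f₀ y ≤ β})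
    (hβ₀ : (∀ i, f i (x 0) ≤ 0) ∧ f₀ (x 0) ≤ β)
    (x_c : EuclideanSpace ℝ (Fin d)) (φ : ℕ → ℕ) (hφ : StrictMono φ)
    (hlim : Tendsto (x ∘ φ) atTop (nhds x_c))
    (hgrad₀ : gradient f₀ x_c ≠ 0) :
    ∃ i, f i x_c = 0 := by
  by_contra hno
  push Not at hno
  have hcont₀ := hdiff₀.continuous
  have hc : ∀ i, f i x_c < 0 := by
    intro i
    refine lt_of_le_of_ne ?_ (hno i)
    have := ((hdiff i).continuous.tendsto x_c).comp hlim
    exact le_of_tendsto' this (fun n => (hfeas (φ n) i).le)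
  have hanti : Antitone (fun k => f₀ (x k)) := by
    refine antitone_nat_of_succ_le (fun k => ?_)
    have h := hopt k (x k) (by
      rw [hS]
      simp only [Set.mem_iInter, Set.mem_setOf_eq]
      intro i
      simpa using (hfeas k i).le)
    simp only [sub_self, norm_zero] at h
    have : 0 ≤ μ * ‖x (k + 1) - x k‖ ^ 2 := by positivity
    linarith
  have hge : ∀ k, f₀ x_c ≤ f₀ (x k) := by
    intro k
    have := (hcont₀.tendsto x_c).comp hlim
    refine le_of_tendsto this ?_
    filter_upwards [eventually_ge_atTop k] with n hn
    exact hanti (hn.trans (hφ.le_apply))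
  set g := gradient f₀ x_c with hg
  have hgpos : 0 < ‖g‖ := norm_pos_iff.mpr hgrad₀
  -- descent direction
  have hder : HasDerivAt (fun t : ℝ => f₀ (x_c - t • g) + μ * (t * ‖g‖) ^ 2) (-‖g‖ ^ 2) 0 := by
    have h1 : HasFDerivAt f₀ (InnerProductSpace.toDual ℝ _ g) (x_c - (0 : ℝ) • g) := by
      rw [zero_smul, sub_zero]
      exact (hdiff₀ x_c).hasGradientAt.hasFDerivAt
    have h2 : HasDerivAt (fun t : ℝ => x_c - t • g) (-g) 0 := by
      simpa using ((hasDerivAt_id (0 : ℝ)).smul_const g).const_sub x_c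
    have h3 := h1.comp_hasDerivAt (0 : ℝ) h2
    have h4 : HasDerivAt (fun t : ℝ => μ * (t * ‖g‖) ^ 2) 0 0 := by
      simpa using ((((hasDerivAt_id (0 : ℝ)).mul_const ‖g‖).pow 2).const_mul μ)
    have h5 := h3.add h4
    have h6 : (InnerProductSpace.toDual ℝ (EuclideanSpace ℝ (Fin d)) g) (-g) + 0 = -‖g‖ ^ 2 := by
      rw [InnerProductSpace.toDual_apply_apply, inner_neg_right, real_inner_self_eq_norm_sq, add_zero]
    rw [h6] at h5
    exact h5
  have ht1 : ∀ᶠ t in nhdsWithin (0 : ℝ) (Set.Ioi 0),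
      f₀ (x_c - t • g) + μ * (t * ‖g‖) ^ 2 < f₀ x_c := by
    have h := hder.hasDerivWithinAt (s := Set.Ioi 0)
    rw [hasDerivWithinAt_iff_tendsto_slope' (by simp)] at h
    have hneg : -‖g‖ ^ 2 < 0 := by nlinarith
    filter_upwards [h.eventually_lt_const hneg, self_mem_nhdsWithin] with t ht htp
    rw [slope_def_field] at ht
    have htp : 0 < t := htp
    rw [div_lt_iff₀ (by simpa using htp)] at ht
    simp at ht
    linarith
  have ht2 : ∀ᶠ t in nhdsWithin (0 : ℝ) (Set.Ioi 0), ∀ i,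
      f i x_c + (d * |L i|) * (t * ‖g‖) + 2 * M i * (t * ‖g‖) ^ 2 < 0 := by
    rw [eventually_all]
    intro i
    have hcn : Continuous (fun t : ℝ =>
      f i x_c + (d * |L i|) * (t * ‖g‖) + 2 * M i * (t * ‖g‖) ^ 2) := by fun_prop
    have := hcn.tendsto 0
    exact (this.mono_left nhdsWithin_le_nhds).eventually_lt_const (by simpa using hc i)
  obtain ⟨t, ⟨h1, h2⟩, htpos⟩ := ((ht1.and ht2).and self_mem_nhdsWithin).exists
  have htpos : 0 < t := htpos
  have hn1 : ∀ᶠ n in atTop,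
      f₀ (x (φ n) - t • g) + μ * (t * ‖g‖) ^ 2 < f₀ x_c := by
    have hcn : Continuous (fun y => f₀ (y - t • g) + μ * (t * ‖g‖) ^ 2) := by fun_prop
    exact ((hcn.tendsto x_c).comp hlim).eventually_lt_const h1
  have hn2 : ∀ᶠ n in atTop, ∀ i,
      f i (x (φ n)) + (d * |L i|) * (t * ‖g‖) + 2 * M i * (t * ‖g‖) ^ 2 < 0 := by
    rw [eventually_all]
    intro i
    have := (hdiff i).continuous
    have hcn : Continuous (fun y =>
      f i y + (d * |L i|) * (t * ‖g‖) + 2 * M i * (t * ‖g‖) ^ 2) := by fun_prop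
    exact ((hcn.tendsto x_c).comp hlim).eventually_lt_const (h2 i)
  obtain ⟨n, hA, hB⟩ := (hn1.and hn2).exists
  have hnorm : ‖x (φ n) - t • g - x (φ n)‖ = t * ‖g‖ := by
    rw [sub_sub_cancel_left, norm_neg, norm_smul, Real.norm_eq_abs, abs_of_pos htpos]
  have h := hopt (φ n) (x (φ n) - t • g) (by
    rw [hS]
    simp only [Set.mem_iInter, Set.mem_setOf_eq]
    intro i
    have hi := real_inner_le_norm (fdGrad d (f i) (x (φ n)) (ν (φ n))) (x (φ n) - t • g - x (φ n))
    rw [hnorm] at hi ⊢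
    have hb := mul_le_mul_of_nonneg_right (fdGrad_bound d (f i) (L i) (hL i) (x (φ n)) (ν (φ n)))
      (by positivity : 0 ≤ t * ‖g‖)
    linarith [hB i])
  rw [hnorm] at h
  have : 0 ≤ μ * ‖x (φ n + 1) - x (φ n)‖ ^ 2 := by positivity
  linarith [hge (φ n + 1)]
end

section
/- Consider the SZO-QQ setup below. Suppose in addition that there exists a cluster point x_c* of the iterate sequence (x_k) such that ∇f_i(x_c*) ≠ 0 for every i ∈ {1,…,m} with f_i(x_c*) = 0. Then every cluster point x_c of (x_k) is a minimizer of f₀ over Ω, i.e. f₀(x_c) = inf{f₀(x) : x ∈ Ω}. -/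
open RealInnerProductSpace Filter

theorem aux_grad_ineq {d : ℕ} {f : EuclideanSpace ℝ (Fin d) → ℝ}
    (hc : ConvexOn ℝ Set.univ f) (hd : Differentiable ℝ f) (x y : EuclideanSpace ℝ (Fin d)) :
    ⟪gradient f x, y - x⟫ ≤ f y - f x := by
  have h1 : ConvexOn ℝ Set.univ (f ∘ (AffineMap.lineMap x y : ℝ →ᵃ[ℝ] _)) := by
    have := hc.comp_affineMap (AffineMap.lineMap x y : ℝ →ᵃ[ℝ] EuclideanSpace ℝ (Fin d))
    simpa using this
  have hg := (hd x).hasGradientAt.hasFDerivAt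
  have hlm : HasDerivAt (fun t : ℝ => (AffineMap.lineMap x y : ℝ →ᵃ[ℝ] _) t) (y - x) 0 :=
    AffineMap.hasDerivAt_lineMap
  have h2 : HasDerivAt (f ∘ (AffineMap.lineMap x y : ℝ →ᵃ[ℝ] _)) ⟪gradient f x, y - x⟫ 0 := by
    have hg' : HasFDerivAt f ((InnerProductSpace.toDual ℝ _) (gradient f x))
        ((AffineMap.lineMap x y : ℝ →ᵃ[ℝ] _) (0 : ℝ)) := by simpa using hg
    have := hg'.comp_hasDerivAt (0 : ℝ) hlm
    simpa using this
  have h3 := h1.le_slope_of_hasDerivAt (Set.mem_univ 0) (Set.mem_univ 1) one_pos h2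
  simpa [slope_def_field] using h3

theorem aux_fd {d : ℕ} {f : EuclideanSpace ℝ (Fin d) → ℝ}
    (hc : ConvexOn ℝ Set.univ f) (hd : Differentiable ℝ f) (M : ℝ)
    (hM : ∀ x₁ x₂, ‖gradient f x₁ - gradient f x₂‖ ≤ M * ‖x₁ - x₂‖)
    (x v : EuclideanSpace ℝ (Fin d)) (ν : ℝ) (hν : 0 < ν) :
    ⟪fdGrad d f x ν, v⟫ ≤ ⟪gradient f x, v⟫ + d * (M * ν) * ‖v‖ := by
  have hq : ∀ j : Fin d, |(f (x + ν • EuclideanSpace.single j (1 : ℝ)) - f x) / ν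
      - gradient f x j| ≤ M * ν := by
    intro j
    set y := x + ν • EuclideanSpace.single j (1 : ℝ) with hy
    have hyx : y - x = ν • EuclideanSpace.single j (1 : ℝ) := by simp [hy]
    have hxy : x - y = -(ν • EuclideanSpace.single j (1 : ℝ)) := by simp [hy]
    have hn : ‖y - x‖ = ν := by
      rw [hyx, norm_smul]; simp [abs_of_pos hν]
    have a1 := aux_grad_ineq hc hd x y
    have a2 := aux_grad_ineq hc hd y x
    have a3 := hM y x
    have a4 : ⟪gradient f y - gradient f x, y - x⟫ ≤ M * ν * ν := by
      refine (real_inner_le_norm _ _).trans ?_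
      rw [hn] at *
      exact mul_le_mul_of_nonneg_right a3 hν.le
    rw [inner_sub_left] at a4
    have a5 : ⟪gradient f y, x - y⟫ = - ⟪gradient f y, y - x⟫ := by
      rw [← inner_neg_right, neg_sub]
    have a6 : ⟪gradient f x, y - x⟫ = ν * gradient f x j := by
      rw [hyx, real_inner_smul_right, EuclideanSpace.inner_single_right]; simp
    have a7 : (f y - f x) / ν - gradient f x j = ((f y - f x) - ν * gradient f x j) / ν := by
      field_simp
    rw [a7, abs_of_nonneg (div_nonneg (by linarith) hν.le), div_le_iff₀ hν]
    linarith
  have e1 : ⟪fdGrad d f x ν, v⟫ = ∑ j : Fin d,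
      ((f (x + ν • EuclideanSpace.single j (1 : ℝ)) - f x) / ν) * v j := by
    unfold fdGrad
    rw [sum_inner]
    refine Finset.sum_congr rfl fun j _ => ?_
    rw [real_inner_smul_left, EuclideanSpace.inner_single_left]; simp
  have e2 : ⟪gradient f x, v⟫ = ∑ j : Fin d, gradient f x j * v j := by
    rw [PiLp.inner_apply]
    refine Finset.sum_congr rfl fun j _ => ?_
    simp [mul_comm]
  have e3 : ∑ j : Fin d, M * ν * ‖v‖ = d * (M * ν) * ‖v‖ := by
    simp; ring
  rw [e1, e2, ← e3, ← Finset.sum_add_distrib]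
  refine Finset.sum_le_sum fun j _ => ?_
  have b1 : ‖v j‖ ≤ ‖v‖ := PiLp.norm_apply_le v j
  have b2 := hq j
  rw [Real.norm_eq_abs] at b1
  have b3 := mul_le_mul b2 b1 (abs_nonneg _) ((abs_nonneg _).trans b2)
  rw [← abs_mul] at b3
  have b4 := (le_abs_self _).trans b3
  linarith

theorem aux_lim (a b C s0 : ℝ) (hs0 : 0 < s0)
    (h : ∀ s, 0 < s → s ≤ s0 → a ≤ b + s * C) : a ≤ b := by
  by_contra hab
  push Not at hab
  have hC : 0 < |C| + 1 := by positivity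
  set s := min s0 ((a - b) / (2 * (|C| + 1))) with hs
  have hs1 : 0 < s := lt_min hs0 (div_pos (by linarith) (by linarith))
  have h1 := h s hs1 (min_le_left _ _)
  have h2 : s * (2 * (|C| + 1)) ≤ a - b := by
    rw [← le_div_iff₀ (by linarith)]; exact min_le_right _ _
  have h3 : s * C ≤ s * |C| := mul_le_mul_of_nonneg_left (le_abs_self C) hs1.le
  nlinarith [abs_nonneg C]

theorem stmt16 (d m : ℕ) (hd : 1 ≤ d) [NeZero m]
    (f₀ : EuclideanSpace ℝ (Fin d) → ℝ) (f : Fin m → EuclideanSpace ℝ (Fin d) → ℝ)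
    (hconv₀ : ConvexOn ℝ Set.univ f₀) (hconv : ∀ i, ConvexOn ℝ Set.univ (f i))
    (hdiff₀ : Differentiable ℝ f₀) (hdiff : ∀ i, Differentiable ℝ (f i))
    (L₀ M₀ : ℝ) (L Minf M : Fin m → ℝ) (μ : ℝ) (hμ : 0 < μ)
    (hL₀ : ∀ x₁ x₂, |f₀ x₁ - f₀ x₂| ≤ L₀ * ‖x₁ - x₂‖)
    (hM₀ : ∀ x₁ x₂, ‖gradient f₀ x₁ - gradient f₀ x₂‖ ≤ M₀ * ‖x₁ - x₂‖)
    (hL : ∀ i x₁ x₂, |f i x₁ - f i x₂| ≤ L i * ‖x₁ - x₂‖)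
    (hMinf : ∀ i x₁ x₂, ‖gradient (f i) x₁ - gradient (f i) x₂‖ ≤ Minf i * ‖x₁ - x₂‖)
    (hM : ∀ i, Minf i < M i)
    (Lmax : ℝ) (hLmax : Lmax = ⨆ i, L i)
    (Ω : Set (EuclideanSpace ℝ (Fin d))) (hΩ : Ω = {y | ∀ i, f i y ≤ 0})
    (x : ℕ → EuclideanSpace ℝ (Fin d))
    (hfeas : ∀ k i, f i (x k) < 0)
    (l ν : ℕ → ℝ)
    (hl : ∀ k, l k = ⨅ i, (-(f i (x k))) / Lmax)
    (hν₀ : ν 0 = 2 * l 0 / Real.sqrt d)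
    (hνk : ∀ k : ℕ, 1 ≤ k → ν k = min (2 * l k / Real.sqrt d) (1 / (k : ℝ)))
    (S : ℕ → Set (EuclideanSpace ℝ (Fin d)))
    (hS : ∀ k, S k = ⋂ i, {y : EuclideanSpace ℝ (Fin d) |
        f i (x k) + ⟪fdGrad d (f i) (x k) (ν k), y - x k⟫ + 2 * M i * ‖y - x k‖ ^ 2 ≤ 0})
    (hstep : ∀ k, x (k + 1) ∈ S k)
    (hopt : ∀ k, ∀ y ∈ S k,
      f₀ (x (k + 1)) + μ * ‖x (k + 1) - x k‖ ^ 2 ≤ f₀ y + μ * ‖y - x k‖ ^ 2)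
    (β : ℝ)
    (hβbdd : Bornology.IsBounded {y ∈ Ω | f₀ y ≤ β})
    (hβ₀ : x 0 ∈ Ω ∧ f₀ (x 0) ≤ β)
    (x_cstar : EuclideanSpace ℝ (Fin d)) (ψ : ℕ → ℕ) (hψ : StrictMono ψ)
    (hlimstar : Tendsto (x ∘ ψ) atTop (nhds x_cstar))
    (hgradstar : ∀ i, f i x_cstar = 0 → gradient (f i) x_cstar ≠ 0) :
    ∀ (x_c : EuclideanSpace ℝ (Fin d)) (φ : ℕ → ℕ), StrictMono φ →
      Tendsto (x ∘ φ) atTop (nhds x_c) →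
      f₀ x_c = sInf (f₀ '' Ω) := by
  intro x_c φ hφ hlim
  have hMinf0 : ∀ i, 0 ≤ Minf i := by
    intro i
    have := (norm_nonneg _).trans (hMinf i (EuclideanSpace.single ⟨0, hd⟩ (1 : ℝ)) 0)
    simpa using this
  have hmem : ∀ k, x k ∈ S k := by
    intro k
    rw [hS]
    simp only [Set.mem_iInter, Set.mem_setOf_eq]
    intro i
    simpa using (hfeas k i).le
  have hanti : Antitone (fun k => f₀ (x k)) := by
    refine antitone_nat_of_succ_le fun k => ?_
    have h := hopt k _ (hmem k)
    have h2 : 0 ≤ μ * ‖x (k + 1) - x k‖ ^ 2 := by positivity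
    simp at h
    linarith
  have hcont₀ : Continuous f₀ := hdiff₀.continuous
  have hT : Tendsto (fun k => f₀ (x k)) atTop (nhds (f₀ x_c)) :=
    (tendsto_iff_tendsto_subseq_of_antitone hanti hφ.tendsto_atTop).2
      ((hcont₀.tendsto x_c).comp hlim)
  obtain ⟨R, hR⟩ := hβbdd.exists_norm_le
  have hxR : ∀ k, ‖x k‖ ≤ R := by
    intro k
    refine hR _ ⟨?_, (hanti (Nat.zero_le k)).trans hβ₀.2⟩
    rw [hΩ]
    exact fun i => (hfeas k i).le
  -- gradient error
  have herr : ∀ k, 1 ≤ k → ∀ i v, ⟪fdGrad d (f i) (x k) (ν k), v⟫ ≤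
      ⟪gradient (f i) (x k), v⟫ + d * (Minf i * (1 / (k : ℝ))) * ‖v‖ := by
    intro k hk i v
    have hk0 : (0 : ℝ) < k := by exact_mod_cast hk
    have hnn : 0 ≤ d * (Minf i * (1 / (k : ℝ))) * ‖v‖ := by
      have := hMinf0 i
      positivity
    rcases lt_or_ge 0 Lmax with hpos | hneg
    · have hlk : 0 < l k := by
        rw [hl]
        obtain ⟨i0, hi0⟩ := exists_eq_ciInf_of_finite (f := fun i => (-(f i (x k))) / Lmax)
        rw [← hi0]
        exact div_pos (by linarith [hfeas k i0]) hpos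
      have hsd : 0 < Real.sqrt d := Real.sqrt_pos.2 (by exact_mod_cast hd)
      have hν : 0 < ν k := by
        rw [hνk k hk]
        exact lt_min (by positivity) (by positivity)
      have hν2 : ν k ≤ 1 / (k : ℝ) := by
        rw [hνk k hk]; exact min_le_right _ _
      refine (aux_fd (hconv i) (hdiff i) (Minf i) (hMinf i) (x k) v (ν k) hν).trans ?_
      have := hMinf0 i
      gcongr
    · have hLi : L i ≤ 0 := by
        have : L i ≤ ⨆ i, L i := le_ciSup (Set.finite_range L).bddAbove i
        linarith
      have hcst : ∀ y, f i y = f i 0 := by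
        intro y
        have h1 := hL i y 0
        have h2 : L i * ‖y - 0‖ ≤ 0 := mul_nonpos_of_nonpos_of_nonneg hLi (norm_nonneg _)
        have h3 := abs_nonpos_iff.1 (h1.trans h2)
        linarith
      have hfc : f i = fun _ => f i 0 := funext hcst
      have g1 : fdGrad d (f i) (x k) (ν k) = 0 := by
        unfold fdGrad
        refine Finset.sum_eq_zero fun j _ => ?_
        rw [hcst (_ + _), hcst (x k)]; simp
      have g2 : gradient (f i) (x k) = 0 := by
        rw [hfc]; simp [gradient]
      rw [g1, g2]
      simpa using hnn
  -- key
  have key : ∀ w, (∀ i, f i w < 0) → f₀ x_c ≤ f₀ w := by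
    intro w hw
    obtain ⟨i1, hi1⟩ := Finite.exists_max (fun i => f i w)
    obtain ⟨i0, hi0⟩ := Finite.exists_max M
    set ε := -(f i1 w) with hε
    have hεpos : 0 < ε := by linarith [hw i1]
    set D := ‖w‖ + R with hD
    have hDk : ∀ k, ‖w - x k‖ ≤ D := fun k =>
      (norm_sub_le _ _).trans (by linarith [hxR k])
    have hD0 : 0 ≤ D := (norm_nonneg _).trans (hDk 0)
    have hM0 : 0 < M i0 := (hMinf0 i0).trans_lt (hM i0)
    have hden : 0 < 2 * (2 * M i0 * D ^ 2 + 1) := by positivity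
    refine aux_lim _ _ (μ * D ^ 2) (min 1 (ε / (2 * (2 * M i0 * D ^ 2 + 1))))
      (lt_min one_pos (by positivity)) ?_
    intro s hs hs0
    have hs1 : s ≤ 1 := hs0.trans (min_le_left _ _)
    have hs2 : s * (2 * (2 * M i0 * D ^ 2 + 1)) ≤ ε := by
      rw [← le_div_iff₀ hden]; exact hs0.trans (min_le_right _ _)
    have hev : ∀ᶠ k : ℕ in atTop, (d * M i0 * D) * (1 / (k : ℝ)) < ε / 2 := by
      have h0 : Tendsto (fun k : ℕ => (d * M i0 * D) * (1 / (k : ℝ))) atTop (nhds 0) := by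
        simpa using (tendsto_one_div_atTop_nhds_zero_nat (𝕜 := ℝ)).const_mul (d * M i0 * D)
      exact h0.eventually (gt_mem_nhds (by linarith))
    have hev2 : ∀ᶠ k : ℕ in atTop,
        f₀ (x (k + 1)) ≤ (1 - s) * f₀ (x k) + s * f₀ w + μ * (s ^ 2 * D ^ 2) := by
      filter_upwards [hev, eventually_ge_atTop 1] with k hk hk1
      have hk0 : (0 : ℝ) < k := by exact_mod_cast hk1
      have hsq : ‖w - x k‖ ^ 2 ≤ D ^ 2 := by
        have := hDk k
        gcongr
      have hy : x k + s • (w - x k) ∈ S k := by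
        rw [hS]
        simp only [Set.mem_iInter, Set.mem_setOf_eq]
        intro i
        rw [add_sub_cancel_left, real_inner_smul_right, norm_smul, Real.norm_of_nonneg hs.le,
          mul_pow]
        have c1 := herr k hk1 i (w - x k)
        have c2 := aux_grad_ineq (hconv i) (hdiff i) (x k) w
        have c3 : d * (Minf i * (1 / (k : ℝ))) * ‖w - x k‖ ≤ (d * M i0 * D) * (1 / (k : ℝ)) := by
          have e1 : Minf i ≤ M i0 := (hM i).le.trans (hi0 i)
          have e2 := hDk k
          have e3 := hMinf0 i
          calc d * (Minf i * (1 / (k : ℝ))) * ‖w - x k‖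
              ≤ d * (M i0 * (1 / (k : ℝ))) * D := by gcongr
            _ = _ := by ring
        have c4 : f i w ≤ -ε := by have := hi1 i; linarith
        have c5 : ⟪fdGrad d (f i) (x k) (ν k), w - x k⟫ ≤ - f i (x k) - ε / 2 := by linarith
        have c6 := mul_le_mul_of_nonneg_left c5 hs.le
        have c7 : 2 * M i * (s ^ 2 * ‖w - x k‖ ^ 2) ≤ 2 * M i0 * (s ^ 2 * D ^ 2) := by
          have := hi0 i
          gcongr
        have c8 : (1 - s) * f i (x k) ≤ 0 :=
          mul_nonpos_of_nonneg_of_nonpos (by linarith) (hfeas k i).le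
        have c9 := mul_le_mul_of_nonneg_left hs2 hs.le
        nlinarith
      have h1 := hopt k _ hy
      rw [add_sub_cancel_left, norm_smul, Real.norm_of_nonneg hs.le, mul_pow] at h1
      have h2 : f₀ (x k + s • (w - x k)) ≤ (1 - s) * f₀ (x k) + s * f₀ w := by
        have := hconv₀.2 (Set.mem_univ (x k)) (Set.mem_univ w)
          (show (0 : ℝ) ≤ 1 - s by linarith) hs.le (by ring)
        have e : x k + s • (w - x k) = (1 - s) • x k + s • w := by module
        rw [e]; simpa using this
      have h3 : μ * (s ^ 2 * ‖w - x k‖ ^ 2) ≤ μ * (s ^ 2 * D ^ 2) := by gcongr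
      have h4 : 0 ≤ μ * ‖x (k + 1) - x k‖ ^ 2 := by positivity
      linarith
    have hfin := le_of_tendsto_of_tendsto (hT.comp (tendsto_add_atTop_nat 1))
      (((hT.const_mul (1 - s)).add_const (s * f₀ w)).add_const (μ * (s ^ 2 * D ^ 2))) hev2
    have : s * f₀ x_c ≤ s * (f₀ w + s * (μ * D ^ 2)) := by nlinarith
    exact le_of_mul_le_mul_left this hs
  have hleast : IsLeast (f₀ '' Ω) (f₀ x_c) := by
    constructor
    · refine ⟨x_c, ?_, rfl⟩
      rw [hΩ]
      intro i
      exact le_of_tendsto (((hdiff i).continuous.tendsto x_c).comp hlim)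
        (Eventually.of_forall fun k => (hfeas (φ k) i).le)
    · rintro _ ⟨y, hy, rfl⟩
      rw [hΩ] at hy
      refine aux_lim _ _ (f₀ (x 0) - f₀ y) 1 one_pos ?_
      intro s hs hs1
      have hcv : ∀ g : EuclideanSpace ℝ (Fin d) → ℝ, ConvexOn ℝ Set.univ g →
          g ((1 - s) • y + s • x 0) ≤ (1 - s) * g y + s * g (x 0) := by
        intro g hg
        simpa using hg.2 (Set.mem_univ y) (Set.mem_univ (x 0))
          (show (0 : ℝ) ≤ 1 - s by linarith) hs.le (by ring)
      have h1 := key ((1 - s) • y + s • x 0) (fun i => by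
        have a1 := hcv _ (hconv i)
        have a2 : (1 - s) * f i y ≤ 0 :=
          mul_nonpos_of_nonneg_of_nonpos (by linarith) (hy i)
        have a3 : s * f i (x 0) < 0 := mul_neg_of_pos_of_neg hs (hfeas 0 i)
        linarith)
      have h2 := hcv _ hconv₀
      linarith
  exact hleast.csInf_eq.symm
end

section
/- Let f : ℝ^d → ℝ, let x_c, x' ∈ ℝ^d, g ∈ ℝ^d, and constants L_max, M_max, M, r_c > 0 with M ≤ M_max. Suppose f(x_c) < 0, f(x') < f(x_c)/2, ‖g‖ ≤ 2 L_max, 2 L_max ‖x_c − x'‖ + 4 M_max ‖x_c − x'‖² < −f(x_c)/4, and 2 L_max r_c + 4 M_max r_c² < −f(x_c)/4. Then every y with ‖y − x_c‖ ≤ r_c satisfies f(x') + ⟨g, y − x'⟩ + 2M‖y − x'‖² < 0; that is, the closed ball of radius r_c around x_c is contained in the quadratic sublevel set {y : f(x') + ⟨g, y − x'⟩ + 2M‖y − x'‖² ≤ 0}. -/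
open RealInnerProductSpace

theorem stmt17 (d : ℕ) (f : EuclideanSpace ℝ (Fin d) → ℝ)
    (x_c x' : EuclideanSpace ℝ (Fin d)) (g : EuclideanSpace ℝ (Fin d))
    (Lmax Mmax M r_c : ℝ) (hLmax : 0 < Lmax) (hMmax : 0 < Mmax) (hMpos : 0 < M)
    (hrc : 0 < r_c) (hMle : M ≤ Mmax)
    (hfc : f x_c < 0) (hfx' : f x' < f x_c / 2) (hg : ‖g‖ ≤ 2 * Lmax)
    (hclose : 2 * Lmax * ‖x_c - x'‖ + 4 * Mmax * ‖x_c - x'‖ ^ 2 < -f x_c / 4)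
    (hrball : 2 * Lmax * r_c + 4 * Mmax * r_c ^ 2 < -f x_c / 4) :
    ∀ y : EuclideanSpace ℝ (Fin d), ‖y - x_c‖ ≤ r_c →
      f x' + ⟪g, y - x'⟫ + 2 * M * ‖y - x'‖ ^ 2 < 0 := by
  intro y hy
  have h1 : ‖y - x'‖ ≤ r_c + ‖x_c - x'‖ := by
    have h := norm_add_le (y - x_c) (x_c - x')
    rw [sub_add_sub_cancel] at h
    linarith
  have h2 : ⟪g, y - x'⟫ ≤ 2 * Lmax * (r_c + ‖x_c - x'‖) :=
    (real_inner_le_norm _ _).trans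
      (mul_le_mul hg h1 (norm_nonneg _) (by positivity))
  have h3 : ‖y - x'‖ ^ 2 ≤ (r_c + ‖x_c - x'‖) ^ 2 :=
    pow_le_pow_left₀ (norm_nonneg _) h1 2
  have h4 : 2 * M * ‖y - x'‖ ^ 2 ≤ 2 * Mmax * (r_c + ‖x_c - x'‖) ^ 2 :=
    mul_le_mul (by linarith) h3 (by positivity) (by positivity)
  have h5 : 0 ≤ 2 * Mmax * (r_c - ‖x_c - x'‖) ^ 2 := by positivity
  nlinarith
end
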